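/- (Corollary 4.6, second identity.) In U(gl(m,ℂ)), for every q ≥ 0, c̃_q = (−1)^q · Σ_{p=0}^q binom(q,p)·(−m)^{q−p}·K_{p+1}(−c). -/

import Mathlib

open Finset

attribute [local instance 100] LieRing.ofAssociativeRing

/-- `gl(m, ℂ)`: the Lie algebra of `m × m` complex matrices. -/
abbrev glm (m : ℕ) := Matrix (Fin m) (Fin m) ℂ

/-- The universal enveloping algebra `U(gl(m,ℂ))`. -/
abbrev UEA (m : ℕ) := UniversalEnvelopingAlgebra ℂ (glm m)

/-- The image of the matrix unit `e_{kl}` in `U(gl(m,ℂ))`. -/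
noncomputable def E {m : ℕ} (k l : Fin m) : UEA m :=
  UniversalEnvelopingAlgebra.ι ℂ (Matrix.single k l (1 : ℂ))

/-- `e_{kl}^q`, defined by `e_{kl}^0 = δ_{kl}` and `e_{kl}^{q+1} = Σ_i e_{ki} e_{il}^q`. -/
noncomputable def Epow {m : ℕ} : ℕ → Fin m → Fin m → UEA m
  | 0, k, l => if k = l then 1 else 0
  | q + 1, k, l => ∑ i, E k i * Epow q i l

/-- `ẽ_{kl}^q`, defined by `ẽ_{kl}^0 = δ_{kl}` and `ẽ_{kl}^{q+1} = −Σ_i e_{ik} ẽ_{il}^q`. -/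
noncomputable def Etil {m : ℕ} : ℕ → Fin m → Fin m → UEA m
  | 0, k, l => if k = l then 1 else 0
  | q + 1, k, l => -∑ i, E i k * Etil q i l

/-- The Casimir element `c_q = Σ_k e_{kk}^q`. -/
noncomputable def Cas (m : ℕ) (q : ℕ) : UEA m := ∑ k : Fin m, Epow q k k

/-- The Casimir element `c̃_q = Σ_k ẽ_{kk}^q`. -/
noncomputable def CasT (m : ℕ) (q : ℕ) : UEA m := ∑ k : Fin m, Etil q k k

/-- `K_n(−c) ∈ U(gl(m,ℂ))`: `K_0(−c) = 1` and `K_n(−c) = Σ_{p=0}^{n−1} K_p(−c)·c_{n−1−p}`. -/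
noncomputable def Kc (m : ℕ) : ℕ → UEA m
  | 0 => 1
  | n + 1 => ∑ p ∈ (Finset.range (n + 1)).attach, Kc m p.1 * Cas m (n - p.1)
  decreasing_by exact Finset.mem_range.mp p.2

-- HELPERS
theorem E_comm {m : ℕ} (i j k l : Fin m) :
    E i j * E k l = E k l * E i j +
      ((if j = k then E i l else 0) - (if i = l then E k j else 0)) := by
  have h := LieHom.map_lie (UniversalEnvelopingAlgebra.ι ℂ (L := glm m))
    (Matrix.single i j (1 : ℂ)) (Matrix.single k l (1 : ℂ))
  rw [LieRing.of_associative_ring_bracket, LieRing.of_associative_ring_bracket] at h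
  have h2 : (Matrix.single i j (1 : ℂ)) * (Matrix.single k l (1 : ℂ)) =
      if j = k then Matrix.single i l (1 : ℂ) else 0 := by
    split_ifs with hh
    · subst hh; simp
    · simp [hh]
  have h3 : (Matrix.single k l (1 : ℂ)) * (Matrix.single i j (1 : ℂ)) =
      if i = l then Matrix.single k j (1 : ℂ) else 0 := by
    split_ifs with hh
    · subst hh; simp
    · simp [Ne.symm hh]
  rw [h2, h3, map_sub] at h
  have h4 : E i j * E k l - E k l * E i j =
      ((if j = k then E i l else 0) - (if i = l then E k j else 0)) := by
    unfold E
    rw [← h]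
    split_ifs <;> simp
  rw [← h4]; abel

theorem E_comm_Epow {m : ℕ} (q : ℕ) (i j k l : Fin m) :
    E i j * Epow q k l = Epow q k l * E i j +
      ((if j = k then Epow q i l else 0) - (if i = l then Epow q k j else 0)) := by
  induction q generalizing k l with
  | zero =>
    simp only [Epow]
    by_cases h1 : k = l <;> by_cases h2 : j = k <;> by_cases h3 : i = l <;> simp_all
    all_goals grind
  | succ q ih =>
    have key : ∀ r, E i j * (E k r * Epow q r l) = E k r * Epow q r l * E i j +
        ((if j = k then E i r * Epow q r l else 0) - (if i = r then E k j * Epow q r l else 0)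
        + ((if j = r then E k r * Epow q i l else 0)
            - (if i = l then E k r * Epow q r j else 0))) := by
      intro r
      rw [← mul_assoc, E_comm, add_mul, mul_assoc, ih r l, mul_add, sub_mul, mul_sub, mul_assoc]
      simp only [ite_mul, zero_mul, mul_ite, mul_zero]
      abel
    simp only [Epow]
    rw [Finset.mul_sum, Finset.sum_congr rfl (fun r _ => key r)]
    simp only [Finset.sum_add_distrib, Finset.sum_sub_distrib, Finset.sum_ite_eq,
      Finset.mem_univ, if_true, Finset.sum_mul]
    congr 1
    have a1 : ∀ (P : Prop) [Decidable P] (f : Fin m → UEA m),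
        ∑ x, (if P then f x else 0) = if P then ∑ x, f x else 0 := by
      intro P _ f; split_ifs <;> simp
    rw [a1, a1]
    abel

theorem Cas_comm_E {m : ℕ} (q : ℕ) (i j : Fin m) : Commute (Cas m q) (E i j) := by
  symm
  unfold Commute SemiconjBy Cas
  rw [Finset.mul_sum, Finset.sum_mul, Finset.sum_congr rfl (fun k _ => E_comm_Epow q i j k k)]
  simp [Finset.sum_add_distrib, Finset.sum_sub_distrib]

/-- The transposed generator matrix. -/
noncomputable def ET (m : ℕ) : Matrix (Fin m) (Fin m) (UEA m) := fun k l => E l k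

/-- The shifted transposed generator matrix. -/
noncomputable def FT (m : ℕ) : Matrix (Fin m) (Fin m) (UEA m) := ET m + (m : ℂ) • 1

/-- Transposes of the powers. -/
noncomputable def TT (m n : ℕ) : Matrix (Fin m) (Fin m) (UEA m) := fun k l => Epow n l k

theorem TT_succ (m n : ℕ) : TT m (n + 1) = TT m n * FT m - Cas m n • 1 := by
  rw [FT, mul_add, mul_smul_comm, mul_one]
  ext l k
  simp only [Matrix.sub_apply, Matrix.add_apply, Matrix.mul_apply, Matrix.smul_apply, TT, ET,
    Epow, Matrix.one_apply, smul_eq_mul, mul_ite, mul_one, mul_zero]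
  rw [Finset.sum_congr rfl (fun i _ => E_comm_Epow n k i i l)]
  by_cases h : l = k
  · subst h
    simp [Finset.sum_add_distrib, Finset.sum_sub_distrib, Cas, ← Nat.cast_smul_eq_nsmul ℂ]
    abel
  · simp [Finset.sum_add_distrib, Ne.symm h, h, ← Nat.cast_smul_eq_nsmul ℂ]

theorem TT_eq (m n : ℕ) :
    FT m ^ n = TT m n + ∑ p ∈ range n, Cas m p • FT m ^ (n - 1 - p) := by
  induction n with
  | zero =>
    ext i j
    simp [TT, Epow, Matrix.one_apply, eq_comm]
  | succ n ih =>
    rw [pow_succ, ih, add_mul, Finset.sum_mul, TT_succ, Finset.sum_range_succ]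
    have : ∑ i ∈ range n, Cas m i • FT m ^ (n - 1 - i) * FT m =
        ∑ i ∈ range n, Cas m i • FT m ^ (n + 1 - 1 - i) := by
      refine Finset.sum_congr rfl fun i hi => ?_
      have hi := Finset.mem_range.mp hi
      rw [Matrix.smul_mul, ← pow_succ]
      congr 2
      omega
    rw [this]
    simp

theorem Cas_comm_FT (m q n : ℕ) (i j : Fin m) : Commute (Cas m q) ((FT m ^ n) i j) := by
  induction n generalizing i j with
  | zero =>
    rw [pow_zero, Matrix.one_apply]
    split_ifs
    · exact Commute.one_right _
    · exact Commute.zero_right _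
  | succ n ih =>
    rw [pow_succ, Matrix.mul_apply]
    refine Commute.sum_right _ _ _ fun k _ => (ih i k).mul_right ?_
    rw [FT, Matrix.add_apply, Matrix.smul_apply, Matrix.one_apply]
    refine (Cas_comm_E q j k).add_right (Commute.smul_right ?_ _)
    split_ifs
    · exact Commute.one_right _
    · exact Commute.zero_right _

theorem trace_FT (m n : ℕ) :
    (FT m ^ n).trace = Cas m n + ∑ p ∈ range n, (FT m ^ (n - 1 - p)).trace * Cas m p := by
  conv_lhs => rw [TT_eq]
  rw [Matrix.trace_add, Matrix.trace_sum]
  congr 1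
  refine Finset.sum_congr rfl fun p _ => ?_
  rw [Matrix.trace_smul, smul_eq_mul]
  exact (Commute.sum_right _ _ _ fun k _ => Cas_comm_FT m p _ k k)

theorem Kc_succ (m n : ℕ) : Kc m (n + 1) = ∑ p ∈ range (n + 1), Kc m p * Cas m (n - p) := by
  rw [Kc]
  exact Finset.sum_attach (range (n + 1)) (fun p => Kc m p * Cas m (n - p))

theorem Kc_eq (m n : ℕ) : Kc m (n + 1) = (FT m ^ n).trace := by
  induction n using Nat.strong_induction_on with
  | _ n ih =>
    rw [Kc_succ, trace_FT, Finset.sum_range_succ', add_comm]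
    congr 1
    · simp [Kc]
    · rw [← Finset.sum_range_reflect]
      refine Finset.sum_congr rfl fun p hp => ?_
      have hp := Finset.mem_range.mp hp
      rw [ih _ (by omega)]
      congr 2
      omega

theorem Etil_eq (m q : ℕ) : (Matrix.of fun k l => Etil q k l : Matrix (Fin m) (Fin m) (UEA m)) =
    (-ET m) ^ q := by
  induction q with
  | zero => ext i j; simp [Etil, Matrix.one_apply]
  | succ q ih =>
    rw [pow_succ', ← ih]
    ext i j
    rw [Matrix.mul_apply]
    simp [Etil, ET]

/-- Corollary 4.6, second identity:
`c̃_q = (−1)^q Σ_{p=0}^q C(q,p) (−m)^{q−p} K_{p+1}(−c)`. -/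
theorem statement16 (m : ℕ) (hm : 1 ≤ m) (q : ℕ) :
    CasT m q = (-1 : ℂ) ^ q •
      ∑ p ∈ Finset.range (q + 1),
        ((q.choose p : ℂ) * (-(m : ℂ)) ^ (q - p)) • Kc m (p + 1) := by
  have h1 : CasT m q = ((-ET m) ^ q).trace := by
    rw [← Etil_eq]; rfl
  have h2 : -ET m = (-1 : ℂ) • (FT m + (-(m : ℂ)) • 1) := by
    rw [FT, neg_smul, neg_smul, one_smul]; abel
  have h3 : Commute (FT m) ((-(m : ℂ)) • (1 : Matrix (Fin m) (Fin m) (UEA m))) :=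
    (Commute.one_right _).smul_right _
  rw [h1, h2, smul_pow, Matrix.trace_smul, h3.add_pow, Matrix.trace_sum]
  congr 1
  refine Finset.sum_congr rfl fun p _ => ?_
  rw [Kc_eq, smul_pow, one_pow, mul_smul_comm, mul_one, ← nsmul_eq_mul',
    ← Nat.cast_smul_eq_nsmul ℂ, smul_smul, Matrix.trace_smul]
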